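/- Let k ≥ 0 be an integer and let H : Ω → S(m) be of class C^k on Ω. If the number of distinct eigenvalues of H(x) is constant as x ranges over Ω, then every repeated eigenvalue λ_j : Ω → ℝ and every eigenprojection P_j : Ω → S(m) of H is of class C^k in Ω. -/

import Mathlib

open scoped Classical

/-- Entrywise directional derivative `D_e H(x)` of a matrix-valued map. -/
noncomputable def DH {E : Type*} [NormedAddCommGroup E] [NormedSpace ℝ E] {m : ℕ}
    (H : E → Matrix (Fin m) (Fin m) ℝ) (x e : E) : Matrix (Fin m) (Fin m) ℝ :=
  Matrix.of fun i k => fderiv ℝ (fun y => H y i k) x e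

/-- Second-order directional derivative `D_b D_a H(x)` (first `a`, then `b`). -/
noncomputable def DH2 {E : Type*} [NormedAddCommGroup E] [NormedSpace ℝ E] {m : ℕ}
    (H : E → Matrix (Fin m) (Fin m) ℝ) (x a b : E) : Matrix (Fin m) (Fin m) ℝ :=
  Matrix.of fun i k => fderiv ℝ (fun y => DH H y a i k) x b

/-- The pseudoinverse `A_j(x)` of `λ_j(x)I - H(x)`. -/
noncomputable def Amat {E : Type*} {m : ℕ} (lam : Fin m → E → ℝ)
    (P : Fin m → E → Matrix (Fin m) (Fin m) ℝ) (j : Fin m) (x : E) :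
    Matrix (Fin m) (Fin m) ℝ :=
  ∑ i ∈ Finset.univ.filter (fun i => lam i x ≠ lam j x),
    (((Finset.univ.filter fun k => lam k x = lam i x).card : ℝ) * (lam j x - lam i x))⁻¹ • P i x

/-!
Every eigenprojection is a polynomial in the matrix, `P_j = L_j(H)`, where `L_j` is the Lagrange
polynomial equal to `1` at `λ_j` and to `0` at the other eigenvalues. Hence, as long as eigenvalues
neither merge nor split, `P_j` is as smooth as `H` and the eigenvalues together. Conversely, the
Hellmann–Feynman formula `dλ_j = tr (P_j dH P_j) / tr P_j` shows that `λ_j` is one degree smoother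
than `P_j`, up to the smoothness of `H`, and a bootstrap climbs from `C^0` to `C^k`.

The bootstrap starts from the continuity of the ordered eigenvalues: they stay bounded, since
`∑ λ_i ^ 2 = tr (H ^ 2)`, and each of their limit points is determined by its power sums
`tr (H ^ k)`.
-/

section PowerSums

open Filter Polynomial
open scoped Topology

variable {ι : Type*} [Fintype ι] [LinearOrder ι]

theorem eq_of_card_filter_le_eq {α : Type*} [LinearOrder α] {l l' : ι → α}
    (hl : Monotone l) (hl' : Monotone l')
    (hcard : ∀ c, (Finset.univ.filter (l · ≤ c)).card = (Finset.univ.filter (l' · ≤ c)).card) :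
    l = l' := by
  have sublevel_eq (c : α) : Finset.univ.filter (l · ≤ c) = Finset.univ.filter (l' · ≤ c) := by
    have nested : {i | l i ≤ c} ⊆ {i | l' i ≤ c} ∨ {i | l' i ≤ c} ⊆ {i | l i ≤ c} :=
      IsLowerSet.total (fun _ _ hji hi => (hl hji).trans hi) (fun _ _ hji hi => (hl' hji).trans hi)
    rcases nested with h | h
    · exact Finset.eq_of_subset_of_card_le
        (Finset.monotone_filter_right _ fun _ _ => @h _) (hcard c).ge
    · exact (Finset.eq_of_subset_of_card_le
        (Finset.monotone_filter_right _ fun _ _ => @h _) (hcard c).le).symm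
  have le_iff (c : α) (i : ι) : l i ≤ c ↔ l' i ≤ c := by
    simpa using Finset.ext_iff.mp (sublevel_eq c) i
  exact funext fun i => le_antisymm ((le_iff _ i).mpr le_rfl) ((le_iff _ i).mp le_rfl)

theorem eq_of_sum_eval_eq {K : Type*} [Field K] [CharZero K] [LinearOrder K] {l l' : ι → K}
    (hl : Monotone l) (hl' : Monotone l')
    (hsum : ∀ q : K[X], ∑ i, q.eval (l i) = ∑ i, q.eval (l' i)) : l = l' := by
  refine eq_of_card_filter_le_eq hl hl' fun c => ?_
  let f : K → K := fun t => if t ≤ c then 1 else 0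
  obtain ⟨q, hq⟩ := (exists_eval_eq_iff (Sum.elim l l') (f ∘ Sum.elim l l')).mpr
    fun _ _ h => congrArg f h
  have hql (i : ι) : q.eval (l i) = f (l i) := hq (.inl i)
  have hql' (i : ι) : q.eval (l' i) = f (l' i) := hq (.inr i)
  have hf : ∑ i, f (l i) = ∑ i, f (l' i) := by simpa only [hql, hql'] using hsum q
  simpa [f, Finset.sum_boole] using hf

theorem tendsto_of_tendsto_sum_eval {α : Type*} {F : Filter α} {l : α → ι → ℝ} {l₀ : ι → ℝ}
    (hl : ∀ᶠ y in F, Monotone (l y)) (hl₀ : Monotone l₀)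
    (hsum : ∀ q : ℝ[X], Tendsto (fun y => ∑ i, q.eval (l y i)) F (𝓝 (∑ i, q.eval (l₀ i)))) :
    Tendsto l F (𝓝 l₀) := by
  have hsq : Tendsto (fun y => ∑ i, l y i ^ 2) F (𝓝 (∑ i, l₀ i ^ 2)) := by
    simpa only [eval_pow, eval_X] using hsum (X ^ (2 : ℕ))
  obtain ⟨R, hR⟩ : ∃ R, ∀ᶠ y in F, ∑ i, l y i ^ 2 < R :=
    ⟨_, hsq.eventually_lt_const (lt_add_one _)⟩
  have bounded : ∀ᶠ y in F, l y ∈ Set.Icc (fun _ => -√R) (fun _ => √R) := by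
    filter_upwards [hR] with y hy
    have habs (i : ι) : |l y i| ≤ √R := Real.abs_le_sqrt <|
      (Finset.single_le_sum (fun k _ => sq_nonneg (l y k)) (Finset.mem_univ i)).trans hy.le
    exact ⟨fun i => (abs_le.mp (habs i)).1, fun i => (abs_le.mp (habs i)).2⟩
  refine isCompact_Icc.tendsto_nhds_of_unique_mapClusterPt bounded fun μ _ hμ => ?_
  have hμ_mono : Monotone μ := isClosed_monotone.mem_of_mapClusterPt hμ hl
  refine eq_of_sum_eval_eq hμ_mono hl₀ fun q => ?_
  have hcont : Continuous fun ν : ι → ℝ => ∑ i, q.eval (ν i) := by fun_prop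
  have hclusterPt : MapClusterPt (∑ i, q.eval (μ i)) F fun y => ∑ i, q.eval (l y i) :=
    hμ.continuousAt_comp (f := fun ν : ι → ℝ => ∑ i, q.eval (ν i)) hcont.continuousAt
  exact eq_of_nhds_neBot (hclusterPt.clusterPt.mono (hsum q))

end PowerSums

section Coincidences

open Filter
open scoped Topology

variable {ι : Type*} [Fintype ι]

theorem eq_iff_eq_of_card_image_eq {α β : Type*} [DecidableEq α] [DecidableEq β]
    {f : ι → α} {g : ι → β} (hfg : g.FactorsThrough f)
    (hcard : (Finset.univ.image f).card = (Finset.univ.image g).card) (i j : ι) :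
    f i = f j ↔ g i = g j := by
  refine ⟨@hfg i j, fun hg => ?_⟩
  have : Nonempty β := ⟨g i⟩
  obtain ⟨e, rfl⟩ := (Function.factorsThrough_iff g).mp hfg
  rw [← Finset.image_image] at hcard
  exact Finset.card_image_iff.mp hcard.symm (by simp) (by simp) hg

theorem eventually_eq_iff_eq_of_card_image_eq {X α : Type*} [TopologicalSpace X]
    [TopologicalSpace α] [T2Space α] [DecidableEq α] {l : X → ι → α} {x : X}
    (hl : ContinuousAt l x)
    (hcard : ∀ᶠ y in 𝓝 x, (Finset.univ.image (l y)).card = (Finset.univ.image (l x)).card) :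
    ∀ᶠ y in 𝓝 x, ∀ i j, l y i = l y j ↔ l x i = l x j := by
  have hne : ∀ᶠ y in 𝓝 x, ∀ i j, l x i ≠ l x j → l y i ≠ l y j := by
    simp only [eventually_all]
    exact fun i j hij =>
      ((continuousAt_pi.mp hl i).ne_iff_eventually_ne (continuousAt_pi.mp hl j)).mp hij
  filter_upwards [hne, hcard] with y hy hycard
  exact eq_iff_eq_of_card_image_eq (fun i j => not_imp_not.mp (hy i j)) hycard

end Coincidences

section Algebra

open Polynomial

variable {ι : Type*} [Fintype ι] {K : Type*} [DecidableEq K]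

/-- The multiplicity of the value `l i` in the tuple `l`. -/
def valueMultiplicity (l : ι → K) (i : ι) : ℕ :=
  (Finset.univ.filter fun k => l k = l i).card

theorem valueMultiplicity_ne_zero (l : ι → K) (i : ι) : valueMultiplicity l i ≠ 0 :=
  Finset.card_ne_zero_of_mem (by simp : i ∈ Finset.univ.filter fun k => l k = l i)

variable [Field K] {A : Type*} [Ring A] [Algebra K A]

/-- `p` is the family of eigenprojections of a diagonalizable element `a` of an algebra, the
eigenvalues `l` being repeated according to multiplicity. As `p i` depends only on the value `l i`,
it has to be divided by the number of its repetitions for the family to sum to `1`. -/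
structure IsEigenDecomposition (a : A) (l : ι → K) (p : ι → A) : Prop where
  mul_proj : ∀ i, a * p i = l i • p i
  proj_congr : ∀ i j, l i = l j → p i = p j
  sum_proj : ∑ i, (valueMultiplicity l i : K)⁻¹ • p i = 1

namespace IsEigenDecomposition

variable {a : A} {l : ι → K} {p : ι → A} (h : IsEigenDecomposition a l p)
include h

theorem aeval_mul_proj (q : K[X]) (i : ι) : aeval a q * p i = q.eval (l i) • p i := by
  have := Module.End.aeval_apply_of_mem_apply_eq_smul (f := Algebra.lmul K A a) (p := q)
    (h.mul_proj i)
  rwa [aeval_algHom_apply] at this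

theorem aeval_eq_sum (q : K[X]) :
    aeval a q = ∑ i, ((valueMultiplicity l i : K)⁻¹ * q.eval (l i)) • p i := by
  rw [← mul_one (aeval a q), ← h.sum_proj, Finset.mul_sum]
  simp only [mul_smul_comm, h.aeval_mul_proj, smul_smul]

variable [CharZero K]

theorem map_aeval_eq_sum_eval {τ : A →ₗ[K] K} (hτ : ∀ i, τ (p i) = valueMultiplicity l i)
    (q : K[X]) : τ (aeval a q) = ∑ i, q.eval (l i) := by
  have hmult (i : ι) : (valueMultiplicity l i : K) ≠ 0 :=
    Nat.cast_ne_zero.mpr (valueMultiplicity_ne_zero l i)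
  rw [h.aeval_eq_sum, map_sum]
  refine Finset.sum_congr rfl fun i _ => ?_
  rw [map_smul, hτ, smul_eq_mul, mul_right_comm, inv_mul_cancel₀ (hmult i), one_mul]

theorem aeval_eq_proj {q : K[X]} {j : ι}
    (hq : ∀ i, q.eval (l i) = if l i = l j then 1 else 0) : aeval a q = p j := by
  have hmult : (valueMultiplicity l j : K) ≠ 0 :=
    Nat.cast_ne_zero.mpr (valueMultiplicity_ne_zero l j)
  calc aeval a q = ∑ i with l i = l j, (valueMultiplicity l i : K)⁻¹ • p i := by
        simp only [h.aeval_eq_sum, hq, mul_ite, mul_one, mul_zero, ite_smul, zero_smul,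
          Finset.sum_filter]
    _ = ∑ i with l i = l j, (valueMultiplicity l j : K)⁻¹ • p j := by
        refine Finset.sum_congr rfl fun i hi => ?_
        have hij : l i = l j := (Finset.mem_filter.mp hi).2
        rw [valueMultiplicity, valueMultiplicity, hij, h.proj_congr i j hij]
    _ = p j := by
        rw [Finset.sum_const, ← valueMultiplicity, ← Nat.cast_smul_eq_nsmul K, smul_smul,
          mul_inv_cancel₀ hmult, one_smul]

theorem proj_eq_aeval_prod_basisDivisor (j : ι) :
    p j = aeval a (∏ k with l k ≠ l j, Lagrange.basisDivisor (l j) (l k)) := by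
  refine (h.aeval_eq_proj fun i => ?_).symm
  rw [eval_prod]
  split_ifs with hij
  · refine Finset.prod_eq_one fun k hk => ?_
    rw [hij, Lagrange.eval_basisDivisor_left_of_ne (Finset.mem_filter.mp hk).2.symm]
  · exact Finset.prod_eq_zero (i := i) (by simpa using hij) Lagrange.eval_basisDivisor_right

theorem proj_mul (j : ι) : p j * a = l j • p j := by
  rw [← h.mul_proj j, h.proj_eq_aeval_prod_basisDivisor j]
  simpa only [aeval_X] using ((Commute.all _ (X : K[X])).map (aeval a)).eq

theorem proj_mul_self (j : ι) : p j * p j = p j := by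
  obtain ⟨q, hq⟩ := (exists_eval_eq_iff l fun i => if l i = l j then (1 : K) else 0).mpr
    fun i k hik => by rw [hik]
  nth_rw 1 [← h.aeval_eq_proj hq]
  rw [h.aeval_mul_proj, hq, if_pos rfl, one_smul]

end IsEigenDecomposition

end Algebra

section Continuity

open Filter Polynomial
open scoped Topology

theorem IsEigenDecomposition.tendsto_eigenvalues {A : Type*} [Ring A] [Algebra ℝ A]
    [TopologicalSpace A] [IsTopologicalSemiring A] {ι α : Type*} [Fintype ι] [LinearOrder ι]
    {F : Filter α} {H : α → A} {l : α → ι → ℝ} {P : α → ι → A} {H₀ : A} {l₀ : ι → ℝ} {P₀ : ι → A}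
    (τ : A →L[ℝ] ℝ) (hD : ∀ᶠ y in F, IsEigenDecomposition (H y) (l y) (P y))
    (hmono : ∀ᶠ y in F, Monotone (l y))
    (hτ : ∀ᶠ y in F, ∀ j, τ (P y j) = valueMultiplicity (l y) j)
    (hD₀ : IsEigenDecomposition H₀ l₀ P₀) (hmono₀ : Monotone l₀)
    (hτ₀ : ∀ j, τ (P₀ j) = valueMultiplicity l₀ j) (hH : Tendsto H F (𝓝 H₀)) :
    Tendsto l F (𝓝 l₀) := by
  refine tendsto_of_tendsto_sum_eval hmono hmono₀ fun q => ?_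
  have htrace : Tendsto (fun y => τ (aeval (H y) q)) F (𝓝 (τ (aeval H₀ q))) :=
    ((τ.continuous.comp q.continuous_aeval).tendsto H₀).comp hH
  rw [← hD₀.map_aeval_eq_sum_eval (τ := τ) hτ₀]
  refine htrace.congr' ?_
  filter_upwards [hD, hτ] with y hDy hτy
  exact hDy.map_aeval_eq_sum_eval (τ := τ) hτy q

end Continuity

section Differentiability

open Polynomial
open scoped Topology

variable {𝕜 : Type*} [NontriviallyNormedField 𝕜]
  {E : Type*} [NormedAddCommGroup E] [NormedSpace 𝕜 E]

theorem hasFDerivAt_clm_apply_sub {F G : Type*} [NormedAddCommGroup F] [NormedSpace 𝕜 F]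
    [NormedAddCommGroup G] [NormedSpace 𝕜 G] {Φ : E → F →L[𝕜] G} {f : E → F} {f' : E →L[𝕜] F}
    {x : E} (hΦ : ContinuousAt Φ x) (hf : HasFDerivAt f f' x) :
    HasFDerivAt (fun y => Φ y (f y - f x)) (Φ x ∘L f') x := by
  have hΦo : (fun y => Φ y - Φ x) =o[𝓝 x] fun _ => (1 : ℝ) :=
    (Asymptotics.isLittleO_one_iff ℝ).mpr (tendsto_sub_nhds_zero_iff.mpr hΦ)
  have hvar : HasFDerivAt (fun y => (Φ y - Φ x) (f y - f x)) (0 : E →L[𝕜] G) x := by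
    refine .of_isLittleO ?_
    have hle : (fun y => (Φ y - Φ x) (f y - f x)) =O[𝓝 x] fun y => ‖Φ y - Φ x‖ * ‖f y - f x‖ :=
      .of_norm_le fun y => (Φ y - Φ x).le_opNorm _
    simpa using hle.trans_isLittleO (hΦo.norm_left.mul_isBigO hf.isBigO_sub.norm_norm)
  have hconst : HasFDerivAt (fun y => Φ x (f y - f x)) (Φ x ∘L f') x :=
    (Φ x).hasFDerivAt.comp x (hf.sub_const (f x))
  convert! hvar.add hconst using 1
  · ext y
    simp
  · rw [zero_add]

variable {A : Type*} [NormedRing A] [NormedAlgebra 𝕜 A] {H : E → A} {ι : Type*}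

theorem contDiffAt_aeval_prod_basisDivisor {r : WithTop ℕ∞} {c : E → 𝕜} {d : E → ι → 𝕜} {x : E}
    (S : Finset ι) (hne : ∀ k ∈ S, c x ≠ d x k) (hc : ContDiffAt 𝕜 r c x)
    (hd : ∀ k ∈ S, ContDiffAt 𝕜 r (fun y => d y k) x) (hH : ContDiffAt 𝕜 r H x) :
    ContDiffAt 𝕜 r
      (fun y => aeval (H y) (∏ k ∈ S, Lagrange.basisDivisor (c y) (d y k))) x := by
  induction S using Finset.induction_on with
  | empty => simpa only [Finset.prod_empty, map_one] using contDiffAt_const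
  | insert k S hk ih =>
    rw [Finset.forall_mem_insert] at hne hd
    have hfactor : ContDiffAt 𝕜 r
        (fun y => (c y - d y k)⁻¹ • (H y - d y k • (1 : A))) x :=
      ((hc.sub hd.1).inv (sub_ne_zero.mpr hne.1)).smul (hH.sub (hd.1.smul contDiffAt_const))
    simpa only [Finset.prod_insert hk, Lagrange.basisDivisor, map_mul, map_sub, aeval_C, aeval_X,
      Algebra.algebraMap_eq_smul_one, smul_one_mul] using hfactor.mul (ih hne.2 hd.2)

namespace IsEigenDecomposition

variable [Fintype ι] [DecidableEq 𝕜] [CharZero 𝕜] {l : E → ι → 𝕜} {P : E → ι → A}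

theorem contDiffAt_proj {r : WithTop ℕ∞} {x : E}
    (hD : ∀ᶠ y in 𝓝 x, IsEigenDecomposition (H y) (l y) (P y))
    (hpattern : ∀ᶠ y in 𝓝 x, ∀ i j, l y i = l y j ↔ l x i = l x j)
    (hH : ContDiffAt 𝕜 r H x) (hl : ContDiffAt 𝕜 r l x) : ContDiffAt 𝕜 r P x := by
  rw [contDiffAt_pi] at hl ⊢
  intro j
  let S : Finset ι := {k | l x k ≠ l x j}
  have hP : (fun y => P y j) =ᶠ[𝓝 x]
      fun y => aeval (H y) (∏ k ∈ S, Lagrange.basisDivisor (l y j) (l y k)) := by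
    filter_upwards [hD, hpattern] with y hDy hy
    simp only [hDy.proj_eq_aeval_prod_basisDivisor j, S, ne_eq, hy]
  refine ContDiffAt.congr_of_eventuallyEq ?_ hP
  exact contDiffAt_aeval_prod_basisDivisor S (fun k hk => (Finset.mem_filter.mp hk).2.symm)
    (hl j) (fun k _ => hl k) hH

/-- The Hellmann–Feynman formula. -/
theorem hasFDerivAt_eigenvalue (τ : A →L[𝕜] 𝕜) {x : E} {j : ι} {H' : E →L[𝕜] A}
    (hD : ∀ᶠ y in 𝓝 x, IsEigenDecomposition (H y) (l y) (P y)) (hτ : τ (P x j) ≠ 0)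
    (hP : ContinuousAt (fun y => P y j) x) (hH : HasFDerivAt H H' x) :
    HasFDerivAt (fun y => l y j)
      (((τ (P x j))⁻¹ • τ ∘L ContinuousLinearMap.mulLeftRight 𝕜 A (P x j) (P x j)) ∘L H') x := by
  have hDx := hD.self_of_nhds
  let Φ : E → A →L[𝕜] 𝕜 := fun y =>
    (τ (P x j * P y j))⁻¹ • τ ∘L ContinuousLinearMap.mulLeftRight 𝕜 A (P x j) (P y j)
  have hden : ContinuousAt (fun y => τ (P x j * P y j)) x := by fun_prop
  have hden_ne : τ (P x j * P x j) ≠ 0 := by rwa [hDx.proj_mul_self]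
  have hΦ : ContinuousAt Φ x := by
    refine (hden.inv₀ hden_ne).smul ?_
    fun_prop
  have hl : (fun y => l y j) =ᶠ[𝓝 x] fun y => l x j + Φ y (H y - H x) := by
    filter_upwards [hD, hden.eventually_ne hden_ne] with y hDy hy
    have key : P x j * (H y - H x) * P y j = (l y j - l x j) • (P x j * P y j) := by
      rw [mul_sub, sub_mul, mul_assoc, hDy.mul_proj, hDx.proj_mul, mul_smul_comm, smul_mul_assoc,
        sub_smul]
    simp [Φ, key, mul_comm, hy]
  have := ((hasFDerivAt_clm_apply_sub hΦ hH).const_add (l x j)).congr_of_eventuallyEq hl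
  simpa only [Φ, hDx.proj_mul_self] using this

theorem contDiffOn_eigenvalue_add_one (τ : A →L[𝕜] 𝕜) {Ω : Set E} (hΩ : IsOpen Ω) {j : ι}
    {r : ℕ∞} (hD : ∀ x ∈ Ω, IsEigenDecomposition (H x) (l x) (P x))
    (hτ : ∀ x ∈ Ω, τ (P x j) ≠ 0)
    (hP : ContDiffOn 𝕜 r (fun x => P x j) Ω) (hH : ContDiffOn 𝕜 (r + 1) H Ω) :
    ContDiffOn 𝕜 (r + 1) (fun x => l x j) Ω := by
  obtain ⟨hH_diff, -, hH_fderiv⟩ := (contDiffOn_succ_iff_fderiv_of_isOpen hΩ).mp hH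
  have hderiv : ∀ x ∈ Ω, HasFDerivAt (fun y => l y j)
      (((τ (P x j))⁻¹ • τ ∘L ContinuousLinearMap.mulLeftRight 𝕜 A (P x j) (P x j)) ∘L
        fderiv 𝕜 H x) x := fun x hx => by
    have hnhds := hΩ.mem_nhds hx
    exact hasFDerivAt_eigenvalue τ (by filter_upwards [hnhds] using hD) (hτ x hx)
      (hP.continuousOn.continuousAt hnhds) (hH_diff.differentiableAt hnhds).hasFDerivAt
  have hweight : ContDiffOn 𝕜 r (fun x => (τ (P x j))⁻¹) Ω :=
    (τ.contDiff.comp_contDiffOn hP).inv hτ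
  have hsandwich : ContDiffOn 𝕜 r
      (fun x => ContinuousLinearMap.mulLeftRight 𝕜 A (P x j) (P x j)) Ω :=
    (ContinuousLinearMap.mulLeftRight_isBoundedBilinear 𝕜 A).contDiff.comp₂_contDiffOn hP hP
  refine (contDiffOn_succ_iff_fderiv_of_isOpen hΩ).mpr
    ⟨fun x hx => (hderiv x hx).differentiableAt.differentiableWithinAt, by simp, ?_⟩
  exact ((hweight.smul (contDiffOn_const.clm_comp hsandwich)).clm_comp hH_fderiv).congr
    fun x hx => (hderiv x hx).fderiv

theorem contDiffOn_of_continuousOn (τ : A →L[𝕜] 𝕜) {Ω : Set E} (hΩ : IsOpen Ω)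
    (hD : ∀ x ∈ Ω, IsEigenDecomposition (H x) (l x) (P x)) (hτ : ∀ x ∈ Ω, ∀ j, τ (P x j) ≠ 0)
    (hcard : ∀ x ∈ Ω, ∀ᶠ y in 𝓝[Ω] x,
      (Finset.univ.image (l y)).card = (Finset.univ.image (l x)).card)
    (hl : ContinuousOn l Ω) {r : ℕ∞} (hH : ContDiffOn 𝕜 r H Ω) :
    ContDiffOn 𝕜 r l Ω ∧ ContDiffOn 𝕜 r P Ω := by
  have hD_near {x : E} (hx : x ∈ Ω) : ∀ᶠ y in 𝓝 x, IsEigenDecomposition (H y) (l y) (P y) := by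
    filter_upwards [hΩ.mem_nhds hx] using hD
  have contDiffOn_proj {s : ℕ∞} (hH : ContDiffOn 𝕜 s H Ω) (hl_s : ContDiffOn 𝕜 s l Ω) :
      ContDiffOn 𝕜 s P Ω := fun x hx => by
    have hnhds := hΩ.mem_nhds hx
    have hpattern := eventually_eq_iff_eq_of_card_image_eq (hl.continuousAt hnhds)
      (hΩ.nhdsWithin_eq hx ▸ hcard x hx)
    exact (contDiffAt_proj (hD_near hx) hpattern (hH.contDiffAt hnhds)
      (hl_s.contDiffAt hnhds)).contDiffWithinAt
  have contDiffOn_eigenvalues (s : ℕ) (hH : ContDiffOn 𝕜 s H Ω) : ContDiffOn 𝕜 s l Ω := by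
    induction s with
    | zero => exact contDiffOn_zero.mpr hl
    | succ s ih =>
      have hH_s : ContDiffOn 𝕜 (s : ℕ∞) H Ω := hH.of_le (mod_cast s.le_succ)
      have hP_s := contDiffOn_proj hH_s (ih hH_s)
      exact contDiffOn_pi.mpr fun j =>
        contDiffOn_eigenvalue_add_one τ hΩ hD (hτ · · j) (contDiffOn_pi.mp hP_s j) hH
  have hlr : ContDiffOn 𝕜 r l Ω := contDiffOn_iff_forall_nat_le.mpr fun s hs =>
    contDiffOn_eigenvalues s (hH.of_le (mod_cast hs))
  exact ⟨hlr, contDiffOn_proj hH hlr⟩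

end IsEigenDecomposition

end Differentiability

section Matrices

open scoped Matrix.Norms.Operator

theorem contDiffOn_matrix {E m n : Type*} [NormedAddCommGroup E] [NormedSpace ℝ E] [Fintype m]
    [Fintype n] {r : WithTop ℕ∞} {F : E → Matrix m n ℝ} {s : Set E} :
    ContDiffOn ℝ r F s ↔ ∀ i j, ContDiffOn ℝ r (fun y => F y i j) s := by
  let e : Matrix m n ℝ ≃L[ℝ] (m → n → ℝ) :=
    (Matrix.ofLinearEquiv ℝ).symm.toContinuousLinearEquiv
  rw [← e.comp_contDiffOn_iff]
  simp only [contDiffOn_pi]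
  rfl

theorem eigen_regularity_of_noncrossing_general {E ι n : Type*} [NormedAddCommGroup E]
    [NormedSpace ℝ E] [Fintype ι] [LinearOrder ι] [Fintype n] [DecidableEq n] (k : ℕ∞)
    {Ω : Set E} (hΩ : IsOpen Ω) {H : E → Matrix n n ℝ} {lam : ι → E → ℝ}
    {P : ι → E → Matrix n n ℝ}
    (hmono : ∀ x ∈ Ω, Monotone fun i => lam i x)
    (hD : ∀ x ∈ Ω, IsEigenDecomposition (H x) (fun i => lam i x) (fun i => P i x))
    (htr : ∀ x ∈ Ω, ∀ j, (P j x).trace = valueMultiplicity (fun i => lam i x) j)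
    (hH : ∀ i l, ContDiffOn ℝ k (fun y => H y i l) Ω)
    (hcard : ∀ x ∈ Ω, ∀ᶠ y in nhdsWithin x Ω,
      (Finset.univ.image fun i => lam i y).card = (Finset.univ.image fun i => lam i x).card)
    (j : ι) :
    ContDiffOn ℝ k (lam j) Ω ∧ ∀ i l : n, ContDiffOn ℝ k (fun y => P j y i l) Ω := by
  let trace : Matrix n n ℝ →L[ℝ] ℝ := (Matrix.traceLinearMap n ℝ ℝ).toContinuousLinearMap
  have hH' : ContDiffOn ℝ k H Ω := contDiffOn_matrix.mpr hH
  have hlam_cont : ContinuousOn (fun x i => lam i x) Ω := fun x hx =>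
    IsEigenDecomposition.tendsto_eigenvalues trace (eventually_nhdsWithin_of_forall hD)
      (eventually_nhdsWithin_of_forall hmono) (eventually_nhdsWithin_of_forall htr)
      (hD x hx) (hmono x hx) (htr x hx) (hH'.continuousOn x hx)
  have htr_ne : ∀ x ∈ Ω, ∀ j, trace (P j x) ≠ 0 := fun x hx j =>
    (htr x hx j).trans_ne (Nat.cast_ne_zero.mpr (valueMultiplicity_ne_zero _ j))
  obtain ⟨hlam, hP⟩ :=
    IsEigenDecomposition.contDiffOn_of_continuousOn trace hΩ hD htr_ne hcard hlam_cont hH'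
  exact ⟨contDiffOn_pi.mp hlam j, contDiffOn_matrix.mp (contDiffOn_pi.mp hP j)⟩

end Matrices

theorem eigen_regularity_of_noncrossing {n m : ℕ} (k : ℕ)
    (Ω : Set (EuclideanSpace ℝ (Fin n))) (hΩo : IsOpen Ω) (hΩc : IsConnected Ω)
    (H : EuclideanSpace ℝ (Fin n) → Matrix (Fin m) (Fin m) ℝ)
    (lam : Fin m → EuclideanSpace ℝ (Fin n) → ℝ)
    (P : Fin m → EuclideanSpace ℝ (Fin n) → Matrix (Fin m) (Fin m) ℝ)
    (hsymm : ∀ x ∈ Ω, (H x).IsSymm)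
    (hmono : ∀ x ∈ Ω, Monotone fun i => lam i x)
    (hPsymm : ∀ (j : Fin m) (x), x ∈ Ω → (P j x).IsSymm)
    (hPidem : ∀ (j : Fin m) (x), x ∈ Ω → P j x * P j x = P j x)
    (hHP : ∀ (j : Fin m) (x), x ∈ Ω → H x * P j x = lam j x • P j x)
    (htr : ∀ (j : Fin m) (x), x ∈ Ω →
      (P j x).trace = ((Finset.univ.filter fun i => lam i x = lam j x).card : ℝ))
    (hPeq : ∀ (i j : Fin m) (x), x ∈ Ω → lam i x = lam j x → P i x = P j x)
    (hPorth : ∀ (i j : Fin m) (x), x ∈ Ω → lam i x ≠ lam j x → P i x * P j x = 0)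
    (hcompl : ∀ x ∈ Ω,
      ∑ i, ((Finset.univ.filter fun k => lam k x = lam i x).card : ℝ)⁻¹ • P i x = 1)
    (hH : ∀ i l, ContDiffOn ℝ (k : ℕ∞) (fun y => H y i l) Ω)
    (hconst : ∃ s : ℕ, ∀ x ∈ Ω, (Finset.univ.image fun i => lam i x).card = s) :
    ∀ j : Fin m,
      ContDiffOn ℝ (k : ℕ∞) (lam j) Ω ∧
      ∀ i l : Fin m, ContDiffOn ℝ (k : ℕ∞) (fun y => P j y i l) Ω := by
  obtain ⟨s, hs⟩ := hconst
  exact eigen_regularity_of_noncrossing_general k hΩo hmono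
    (fun x hx => ⟨(hHP · x hx), (hPeq · · x hx), hcompl x hx⟩) (fun x hx j => htr j x hx) hH
    fun x hx => eventually_nhdsWithin_of_forall fun y hy => (hs y hy).trans (hs x hx).symm
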